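/- arXiv:1505.04701 — 3 statements merged into one kernel-verified Lean document; each statement's English description precedes it below -/
import Mathlib

section
/- Let G be a countable amenable group, S a Følner sequence for G, and A, B ⊆ G. If d̄_S(A) ≥ α > 0 and BD(B) > 0, then the product set BA is upper S-syndetic of level α; that is, there exists a finite F ⊆ G such that for every finite L ⊆ G, the set {x ∈ G : Lx ⊆ FBA} has upper S-density at least α. -/
open Filter Pointwise
open scoped symmDiff Classical

variable {G : Type*}

/-- Upper density of `A` along the sequence of finite sets `S`. -/
noncomputable def upperDens (S : ℕ → Finset G) (A : Set G) : ℝ :=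
  limsup (fun n => (((S n).filter (· ∈ A)).card : ℝ) / ((S n).card : ℝ)) atTop

/-- Lower density of `A` along the sequence of finite sets `S`. -/
noncomputable def lowerDens (S : ℕ → Finset G) (A : Set G) : ℝ :=
  liminf (fun n => (((S n).filter (· ∈ A)).card : ℝ) / ((S n).card : ℝ)) atTop

/-- `S` is a (left) Følner sequence for `G`. -/
def IsFolner [Group G] (S : ℕ → Finset G) : Prop :=
  (∀ n, (S n).Nonempty) ∧
  ∀ x : G, Tendsto (fun n => (((x • S n) ∆ S n).card : ℝ) / ((S n).card : ℝ)) atTop (nhds 0)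

/-- (Left) Banach density: supremum of upper densities over all Følner sequences. -/
noncomputable def banachDens [Group G] (A : Set G) : ℝ :=
  sSup {d : ℝ | ∃ S : ℕ → Finset G, IsFolner S ∧ d = upperDens S A}

/-- A finitely additive left invariant mean dominated by upper density. -/
structure GoodMean [Group G] (m : Set G → ℝ) : Prop where
  nonneg : ∀ X, 0 ≤ m X
  univ : m Set.univ = 1
  add : ∀ X Y, Disjoint X Y → m (X ∪ Y) = m X + m Y
  inv : ∀ (g : G) X, m {x | g * x ∈ X} = m X
  wsum : ∀ (K : Finset G) (w : G → ℝ) (X : G → Set G) (Y : Set G) (M : ℝ),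
    (∀ k ∈ K, X k ⊆ Y) → (∀ t ∈ Y, ∑ k ∈ K with t ∈ X k, w k ≤ M) →
    ∑ k ∈ K, w k * m (X k) ≤ M * m Y

lemma ratio_mem (S : ℕ → Finset G) (X : Set G) (n : ℕ) :
    (((S n).filter (· ∈ X)).card : ℝ) / ((S n).card : ℝ) ∈ Set.Icc (0:ℝ) 1 := by
  refine ⟨by positivity, ?_⟩
  apply div_le_one_of_le₀
  · exact_mod_cast Finset.card_filter_le _ _
  · positivity

lemma exists_mean [Group G] (S : ℕ → Finset G) (hS : IsFolner S) (A : Set G) :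
    ∃ m : Set G → ℝ, GoodMean m ∧ m A = upperDens S A ∧ ∀ X, m X ≤ upperDens S X := by
  set r : Set G → ℕ → ℝ := fun X n =>
    (((S n).filter (· ∈ X)).card : ℝ) / ((S n).card : ℝ) with hr
  have hbd : ∀ X n, r X n ∈ Set.Icc (0:ℝ) 1 := fun X n => ratio_mem S X n
  have hb1 : ∀ X, IsBoundedUnder (· ≤ ·) atTop (r X) := fun X =>
    isBoundedUnder_of ⟨1, fun n => (hbd X n).2⟩
  have hb2 : ∀ X, IsCoboundedUnder (· ≤ ·) atTop (r X) := fun X =>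
    IsBoundedUnder.isCoboundedUnder_le (isBoundedUnder_of ⟨0, fun n => (hbd X n).1⟩)
  have hud : ∀ X, upperDens S X = limsup (r X) atTop := fun X => rfl
  have hcl : MapClusterPt (upperDens S A) atTop (r A) := by
    rw [(nhds_basis_Ioo_pos _).mapClusterPt_iff_frequently]
    intro ε hε
    have h1 : ∀ᶠ n in atTop, r A n < upperDens S A + ε :=
      eventually_lt_of_limsup_lt (by rw [← hud]; linarith) (hb1 A)
    have h2 : ∃ᶠ n in atTop, upperDens S A - ε < r A n :=
      frequently_lt_of_lt_limsup (hb2 A) (by rw [← hud]; linarith)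
    exact (h2.and_eventually h1).mono fun n h => h
  obtain ⟨U, hU, hUA⟩ := mapClusterPt_iff_ultrafilter.1 hcl
  have hex : ∀ X, ∃ a, Tendsto (r X) U (nhds a) := by
    intro X
    have := (isCompact_Icc (a := (0:ℝ)) (b := 1)).ultrafilter_le_nhds (U.map (r X))
      (by
        rw [Filter.le_principal_iff]
        exact Filter.mem_map.2 (Filter.univ_mem' fun n => hbd X n))
    obtain ⟨a, -, ha⟩ := this
    exact ⟨a, ha⟩
  choose m hm using hex
  have hpos : ∀ n, (0:ℝ) < (S n).card := fun n => by exact_mod_cast (hS.1 n).card_pos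
  refine ⟨m, ⟨?_, ?_, ?_, ?_, ?_⟩, tendsto_nhds_unique (hm A) hUA, ?_⟩
  · exact fun X => ge_of_tendsto' (hm X) fun n => (hbd X n).1
  · refine tendsto_nhds_unique (hm _) ?_
    have : r Set.univ = fun _ => 1 := by
      funext n
      simp [hr, (hpos n).ne']
    rw [this]
    exact tendsto_const_nhds
  · intro X Y hXY
    refine tendsto_nhds_unique (hm _) (((hm X).add (hm Y)).congr fun n => ?_)
    simp only [hr]
    rw [← add_div, ← Nat.cast_add, ← Finset.card_union_of_disjoint]
    · congr 3
      ext x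
      simp only [Finset.mem_union, Finset.mem_filter, Set.mem_union]
      tauto
    · rw [Finset.disjoint_filter]
      exact fun x _ h1 h2 => Set.disjoint_left.1 hXY h1 h2
  · intro g X
    have h0 : Tendsto (fun n => r {x | g * x ∈ X} n - r X n) U (nhds 0) := by
      refine squeeze_zero_norm (fun n => ?_) ((hS.2 g).mono_left hU)
      simp only [hr]
      rw [← sub_div, Real.norm_eq_abs, abs_div, abs_of_pos (hpos n)]
      apply div_le_div_of_nonneg_right _ (hpos n).le
      have e1 : ((S n).filter (· ∈ {x | g * x ∈ X})).card
          = ((g • S n).filter (· ∈ X)).card := by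
        rw [← Finset.card_smul_finset g ((S n).filter (· ∈ {x | g * x ∈ X}))]
        congr 1
        ext y
        simp only [Finset.mem_smul_finset, Finset.mem_filter, Set.mem_ofPred_eq, smul_eq_mul]
        constructor
        · rintro ⟨x, ⟨h1, h2⟩, rfl⟩
          exact ⟨⟨x, h1, rfl⟩, h2⟩
        · rintro ⟨⟨x, h1, rfl⟩, h2⟩
          exact ⟨x, ⟨h1, h2⟩, rfl⟩
      rw [e1]
      have key : ∀ P Q : Finset G, ((P.filter (· ∈ X)).card : ℝ) ≤
          (Q.filter (· ∈ X)).card + ((P ∆ Q).card : ℝ) := by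
        intro P Q
        rw [← Nat.cast_add]
        norm_cast
        refine le_trans (Finset.card_le_card ?_) (Finset.card_union_le _ _)
        intro x
        simp only [Finset.mem_union, Finset.mem_filter, Finset.mem_symmDiff]
        tauto
      have k1 := key (g • S n) (S n)
      have k2 := key (S n) (g • S n)
      rw [symmDiff_comm] at k2
      rw [abs_le]
      constructor <;> linarith
    have h1 := (hm {x | g * x ∈ X}).sub (hm X)
    have := tendsto_nhds_unique h0 h1
    linarith
  · intro K w X Y M hXY hM
    refine le_of_tendsto_of_tendsto' (tendsto_finsetSum K fun k _ => (hm (X k)).const_mul (w k))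
      ((hm Y).const_mul M) fun n => ?_
    simp only [hr]
    simp_rw [← mul_div_assoc]
    rw [← Finset.sum_div]
    apply div_le_div_of_nonneg_right _ (hpos n).le
    have e : ∀ k ∈ K, w k * (((S n).filter (· ∈ X k)).card : ℝ)
        = ∑ t ∈ (S n).filter (· ∈ Y), if t ∈ X k then w k else 0 := by
      intro k hk
      rw [← Finset.sum_filter, Finset.sum_const, nsmul_eq_mul, mul_comm, Finset.filter_filter]
      congr 3
      ext x
      simp only [Finset.mem_filter]
      have := @hXY k hk x
      tauto
    rw [Finset.sum_congr rfl e, Finset.sum_comm]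
    calc _ ≤ ∑ t ∈ (S n).filter (· ∈ Y), M := by
            refine Finset.sum_le_sum fun t ht => ?_
            rw [← Finset.sum_filter]
            exact hM t (Finset.mem_filter.1 ht).2
      _ = _ := by rw [Finset.sum_const, nsmul_eq_mul, mul_comm]
  · intro X
    refine le_of_forall_pos_le_add fun ε hε => ?_
    have h1 : ∀ᶠ n in atTop, r X n < upperDens S X + ε :=
      eventually_lt_of_limsup_lt (by rw [← hud]; linarith) (hb1 X)
    exact le_of_tendsto (hm X) ((h1.filter_mono hU).mono fun n h => le_of_lt h)

namespace GoodMean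

variable [Group G] {m : Set G → ℝ}

lemma mono (h : GoodMean m) {X Y : Set G} (hXY : X ⊆ Y) : m X ≤ m Y := by
  have := h.add X (Y \ X) Set.disjoint_sdiff_right
  rw [Set.union_sdiff_cancel hXY] at this
  have := h.nonneg (Y \ X)
  linarith

lemma union_le (h : GoodMean m) (X Y : Set G) : m (X ∪ Y) ≤ m X + m Y := by
  have := h.add X (Y \ X) Set.disjoint_sdiff_right
  rw [Set.union_sdiff_self] at this
  have := h.mono (Set.sdiff_subset : Y \ X ⊆ Y)
  linarith

lemma le_one (h : GoodMean m) (X : Set G) : m X ≤ 1 := by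
  rw [← h.univ]; exact h.mono (Set.subset_univ _)

lemma sdiff (h : GoodMean m) (X Y : Set G) : m X = m (X ∩ Y) + m (X \ Y) := by
  rw [← h.add _ _ (Set.disjoint_sdiff_inter.symm), Set.inter_union_sdiff]

lemma empty (h : GoodMean m) : m ∅ = 0 := by
  have := h.add ∅ ∅ (by simp)
  simp at this
  exact this

lemma biUnion_le (h : GoodMean m) (K : Finset G) (X : G → Set G) :
    m {x | ∃ k ∈ K, x ∈ X k} ≤ ∑ k ∈ K, m (X k) := by
  induction K using Finset.induction_on with
  | empty => simp [h.empty]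
  | insert a K ha ih =>
    rw [Finset.sum_insert ha]
    have : {x | ∃ k ∈ insert a K, x ∈ X k} = X a ∪ {x | ∃ k ∈ K, x ∈ X k} := by
      ext x; simp
    rw [this]
    exact (h.union_le _ _).trans (by linarith)

lemma part1 (h : GoodMean m) {B : Set G} (hB : 0 < m B) (ε : ℝ) (hε : 0 < ε) :
    ∃ F : Finset G, ∀ (K : Finset G) (w : G → ℝ), (∀ k, 0 ≤ w k) →
      ∃ s : G, ∑ k ∈ K with k * s ∉ (F : Set G) * B, w k ≤ ε * ∑ k ∈ K, w k := by
  set c := ⨆ F : Finset G, m ((F : Set G) * B) with hc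
  have hbdd : BddAbove (Set.range fun F : Finset G => m ((F : Set G) * B)) :=
    ⟨1, by rintro _ ⟨F, rfl⟩; exact h.le_one _⟩
  have hle : ∀ F : Finset G, m ((F : Set G) * B) ≤ c := fun F => le_ciSup hbdd F
  have hc0 : 0 < c := by
    have := hle {1}
    simp at this
    linarith
  obtain ⟨F, hF⟩ := exists_lt_of_lt_ciSup (show (1 - ε) * c < c by nlinarith)
  refine ⟨F, fun K w hw => ?_⟩
  by_contra! hcon
  set D := (F : Set G) * B with hD
  set W := ∑ k ∈ K, w k with hW
  have hsplit : ∀ s, ∑ k ∈ K with k * s ∈ D, w k + ∑ k ∈ K with k * s ∉ D, w k = W := fun s =>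
    Finset.sum_filter_add_sum_filter_not K _ _
  have hW0 : 0 < W := by
    have h1 := hcon 1
    have h2 := hsplit 1
    have h3 : 0 ≤ ∑ k ∈ K with k * 1 ∈ D, w k := Finset.sum_nonneg fun k _ => hw k
    have h4 : 0 ≤ W := Finset.sum_nonneg fun k _ => hw k
    rcases h4.lt_or_eq with h5 | h5
    · exact h5
    · rw [← h5] at h1 h2; linarith
  have hw1 := h.wsum K w (fun k => {s | k * s ∈ D}) (((K⁻¹ * F : Finset G) : Set G) * B)
    ((1 - ε) * W) (by
      intro k hk s hs
      obtain ⟨f, hf, b, hb, hfb⟩ := hs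
      refine ⟨k⁻¹ * f, ?_, b, hb, ?_⟩
      · exact Finset.mem_coe.2 (Finset.mul_mem_mul (Finset.inv_mem_inv hk) hf)
      · simp only at hfb ⊢
        rw [mul_assoc, hfb]; group) (by
      intro t _
      have h1 := hcon t
      have h2 := hsplit t
      simp only [Set.mem_ofPred_eq]
      linarith)
  simp only [h.inv] at hw1
  rw [← Finset.sum_mul] at hw1
  have h1 := hle (K⁻¹ * F)
  have h2 : 0 ≤ (1 - ε) * W := by
    have h1 := hcon 1
    have h2 := hsplit 1
    have h3 : 0 ≤ ∑ k ∈ K with k * 1 ∈ D, w k := Finset.sum_nonneg fun k _ => hw k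
    linarith
  have h3 := mul_le_mul_of_nonneg_left h1 h2
  have h4 : W * m D ≤ W * ((1 - ε) * c) := by linarith
  have := le_of_mul_le_mul_left h4 hW0
  linarith

lemma part2 (h : GoodMean m) {A B : Set G} {m' : Set G → ℝ} (h' : GoodMean m') (hB : 0 < m' B) :
    ∃ F : Finset G, ∀ L : Finset G,
      m A ≤ m {x : G | ∀ g ∈ L, g * x ∈ (F : Set G) * B * A} := by
  by_cases hcase : ∀ t : G, m (A \ {x | t * x ∈ A}) = 0
  · obtain ⟨b, hb⟩ : B.Nonempty := by
      rw [Set.nonempty_iff_ne_empty]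
      rintro rfl
      rw [h'.empty] at hB
      exact lt_irrefl _ hB
    refine ⟨{1}, fun L => ?_⟩
    have h1 := h.biUnion_le L (fun g => A \ {x | (b⁻¹ * g) * x ∈ A})
    simp only [hcase, Finset.sum_const_zero] at h1
    refine (h.mono (Y := {x : G | ∀ g ∈ L, g * x ∈ (({1} : Finset G) : Set G) * B * A} ∪
      {x | ∃ k ∈ L, x ∈ A \ {x | b⁻¹ * k * x ∈ A}}) ?_).trans ((h.union_le _ _).trans
        (by linarith))
    intro x hx
    by_cases hx2 : ∃ k ∈ L, x ∈ A \ {x | b⁻¹ * k * x ∈ A}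
    · exact Or.inr hx2
    · left
      intro g hg
      have : b⁻¹ * g * x ∈ A := by
        by_contra hne
        exact hx2 ⟨g, hg, hx, hne⟩
      simp only [Finset.coe_singleton, Set.singleton_mul, one_mul, Set.image_id']
      exact ⟨b, hb, _, this, by simp only; group⟩
  · push Not at hcase
    obtain ⟨t, ht⟩ := hcase
    set At : Set G := {x | t * x ∈ A} with hAt
    set ε := m (A \ At) / 5 with hεdef
    have hε : 0 < ε := by
      have := lt_of_le_of_ne (h.nonneg _) ht.symm
      positivity
    have hA' : m (A ∪ At) = m A + 5 * ε := by
      have e : A ∪ At = At ∪ (A \ At) := by rw [Set.union_sdiff_self, Set.union_comm]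
      rw [e, h.add _ _ Set.disjoint_sdiff_right, hAt, h.inv, ← hAt, hεdef]
      ring
    obtain ⟨F, hF⟩ := h'.part1 hB ε hε
    refine ⟨F, fun L => ?_⟩
    set D := (F : Set G) * B with hD
    set Q : Finset G → Set G := fun L => {x | ∃ g ∈ L, g * x ∉ D * A} with hQ
    have hQmono : ∀ {L L' : Finset G}, L ⊆ L' → Q L ⊆ Q L' := by
      rintro L L' hL x ⟨g, hg, hx⟩
      exact ⟨g, hL hg, hx⟩
    have hbdd : BddAbove (Set.range fun L => m (Q L)) :=
      ⟨1, by rintro _ ⟨F, rfl⟩; exact h.le_one _⟩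
    obtain ⟨L1, hL1⟩ := exists_lt_of_lt_ciSup
      (show (⨆ L, m (Q L)) - ε < ⨆ L, m (Q L) by linarith)
    set L2 := L ∪ L1 with hL2
    have hq : ∀ L', m (Q L') ≤ m (Q L2) + ε := by
      intro L'
      have h1 := le_ciSup hbdd L'
      have h2 := h.mono (hQmono (Finset.subset_union_right : L1 ⊆ L2))
      linarith
    set P := Q L2 with hP
    have inv1 : ∀ g : G, m ({x | g * x ∈ P} \ P) ≤ ε := by
      intro g
      have h1 := hq (L2 ∪ L2.image (· * g))
      have h2 : P ∪ ({x | g * x ∈ P} \ P) ⊆ Q (L2 ∪ L2.image (· * g)) := by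
        rintro x (hx | ⟨hx, -⟩)
        · exact hQmono Finset.subset_union_left hx
        · obtain ⟨k, hk, hx⟩ := hx
          refine ⟨k * g, Finset.mem_union_right _ (Finset.mem_image_of_mem _ hk), ?_⟩
          rw [mul_assoc k g x]
          exact hx
      have h3 := h.mono h2
      rw [h.add _ _ Set.disjoint_sdiff_right] at h3
      linarith
    have inv2 : ∀ g : G, m (P \ {x | g * x ∈ P}) ≤ ε := by
      intro g
      have h1 := h.sdiff P {x | g * x ∈ P}
      have h2 := h.sdiff {x | g * x ∈ P} P
      rw [h.inv, Set.inter_comm] at h2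
      have := inv1 g
      linarith
    choose γ hγ using fun x : P => x.2
    set Pg : G → Set G := fun g => {x | ∃ hx : x ∈ P, γ ⟨x, hx⟩ = g} with hPg
    obtain ⟨s, hs⟩ := hF L2 (fun g => m (Pg g)) (fun _ => h.nonneg _)
    have hsum : ∑ k ∈ L2, m (Pg k) ≤ 1 := by
      have := h.wsum L2 (fun _ => 1) Pg Set.univ 1 (fun _ _ => Set.subset_univ _) (by
        intro t _
        rw [Finset.sum_const, nsmul_eq_mul, mul_one]
        norm_cast
        rw [Finset.card_le_one]
        intro a ha b hb
        obtain ⟨h1, h2⟩ := (by simpa only [Finset.mem_filter] using ha : a ∈ L2 ∧ t ∈ Pg a).2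
        obtain ⟨h3, h4⟩ := (by simpa only [Finset.mem_filter] using hb : b ∈ L2 ∧ t ∈ Pg b).2
        rw [← h2, ← h4])
      simpa [h.univ] using this
    have hs1 : m {x | x ∈ P ∧ s⁻¹ * x ∈ A} ≤ ε := by
      have h1 := h.biUnion_le (L2.filter (fun k => k * s ∉ D)) Pg
      have h2 : {x | x ∈ P ∧ s⁻¹ * x ∈ A} ⊆
          {x | ∃ k ∈ L2.filter (fun k => k * s ∉ D), x ∈ Pg k} := by
        rintro x ⟨hx, hxA⟩
        refine ⟨γ ⟨x, hx⟩, Finset.mem_filter.2 ⟨(hγ ⟨x, hx⟩).1, fun hd => ?_⟩, hx, rfl⟩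
        exact (hγ ⟨x, hx⟩).2 ⟨_, hd, _, hxA, by simp only; group⟩
      have h3 := h.mono h2
      have h4 : ε * ∑ k ∈ L2, m (Pg k) ≤ ε * 1 := mul_le_mul_of_nonneg_left hsum hε.le
      linarith
    have hPA : m (P ∩ A) ≤ 2 * ε := by
      have h1 := h.inv s {x | x ∈ P ∧ s⁻¹ * x ∈ A}
      have h2 : P ∩ A ⊆ {x | s * x ∈ {x | x ∈ P ∧ s⁻¹ * x ∈ A}} ∪ (P \ {x | s * x ∈ P}) := by
        rintro x ⟨hx, hxA⟩
        by_cases hsx : s * x ∈ P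
        · left
          exact ⟨hsx, by simpa using hxA⟩
        · exact Or.inr ⟨hx, hsx⟩
      have h3 := (h.mono h2).trans (h.union_le _ _)
      have := inv2 s
      linarith
    have hPAt : m (P ∩ At) ≤ 3 * ε := by
      have h1 := h.inv t {x | t⁻¹ * x ∈ P ∧ x ∈ A}
      have h2 : P ∩ At ⊆ {x | t * x ∈ {x | t⁻¹ * x ∈ P ∧ x ∈ A}} := by
        rintro x ⟨hx, hxA⟩
        exact ⟨by simpa using hx, hxA⟩
      have h3 : {x | t⁻¹ * x ∈ P ∧ x ∈ A} ⊆ (P ∩ A) ∪ ({x | t⁻¹ * x ∈ P} \ P) := by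
        rintro x ⟨hx, hxA⟩
        by_cases hxP : x ∈ P
        · exact Or.inl ⟨hxP, hxA⟩
        · exact Or.inr ⟨hx, hxP⟩
      have h4 := (h.mono h3).trans (h.union_le _ _)
      have h5 := h.mono h2
      have := inv1 t⁻¹
      linarith
    have hfin : A ∪ At ⊆ {x : G | ∀ g ∈ L, g * x ∈ D * A} ∪ ((P ∩ A) ∪ (P ∩ At)) := by
      intro x hx
      by_cases hxP : x ∈ P
      · right
        rcases hx with hx | hx
        · exact Or.inl ⟨hxP, hx⟩
        · exact Or.inr ⟨hxP, hx⟩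
      · left
        intro g hg
        by_contra hne
        exact hxP ⟨g, Finset.mem_union_left _ hg, hne⟩
    have h1 := (h.mono hfin).trans (h.union_le _ _)
    have h2 := h.union_le (P ∩ A) (P ∩ At)
    linarith

end GoodMean

theorem stmt13 [Group G] [Countable G] (S : ℕ → Finset G) (hS : IsFolner S)
    (A B : Set G) (α : ℝ) (hα : 0 < α) (hA : α ≤ upperDens S A)
    (hB : 0 < banachDens B) :
    ∃ F : Finset G, ∀ L : Finset G,
      α ≤ upperDens S {x : G | ∀ g ∈ L, g * x ∈ (F : Set G) * B * A} := by
  obtain ⟨T, hT, hTB⟩ : ∃ T : ℕ → Finset G, IsFolner T ∧ 0 < upperDens T B := by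
    by_contra! hcon
    refine absurd hB (not_lt.2 (Real.sSup_nonpos ?_))
    rintro d ⟨T, hT, rfl⟩
    exact hcon T hT
  obtain ⟨m', h', hm', -⟩ := exists_mean T hT B
  obtain ⟨m, h, hm, hle⟩ := exists_mean S hS A
  obtain ⟨F, hF⟩ := h.part2 (A := A) h' (hm' ▸ hTB)
  exact ⟨F, fun L => hA.trans (hm ▸ (hF L).trans (hle _))⟩
end

section
/- Let G be a countable amenable group, S a Følner sequence for G, and A, B ⊆ G. If the lower S-density of A is at least α > 0 and BD(B) > 0, then for every ε > 0, BA is lower S-syndetic of level α − ε: there exists a finite F ⊆ G such that for every finite L ⊆ G, the set {x ∈ G : Lx ⊆ FBA} has lower S-density at least α − ε. -/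
open Filter Pointwise
open scoped symmDiff Classical

variable {G : Type*}

/-- Relative count of `A` in the `n`-th set. -/
noncomputable def dn (S : ℕ → Finset G) (A : Set G) (n : ℕ) : ℝ :=
  (((S n).filter (· ∈ A)).card : ℝ) / ((S n).card : ℝ)

lemma dn_nonneg (S : ℕ → Finset G) (A : Set G) (n : ℕ) : 0 ≤ dn S A n := by
  unfold dn; positivity

lemma dn_le_one (S : ℕ → Finset G) (A : Set G) (n : ℕ) : dn S A n ≤ 1 := by
  unfold dn
  apply div_le_one_of_le₀ _ (by positivity)
  exact_mod_cast Finset.card_filter_le _ _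

lemma dn_bdd_above (S : ℕ → Finset G) (A : Set G) :
    IsBoundedUnder (· ≤ ·) atTop (dn S A) :=
  isBoundedUnder_of ⟨1, dn_le_one S A⟩

lemma dn_bdd_below (S : ℕ → Finset G) (A : Set G) :
    IsBoundedUnder (· ≥ ·) atTop (dn S A) :=
  isBoundedUnder_of ⟨0, dn_nonneg S A⟩

lemma upperDens_le_one (S : ℕ → Finset G) (A : Set G) : upperDens S A ≤ 1 :=
  limsup_le_of_le (dn_bdd_below S A).isCoboundedUnder_le
    (Eventually.of_forall (dn_le_one S A))

lemma shift_count [Group G] (S : Finset G) (A : Set G) (k : G) :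
    (S.filter (· ∈ A)).card ≤ (S.filter (fun y => k * y ∈ A)).card + ((k • S) ∆ S).card := by
  have h : S.filter (· ∈ A) ⊆
      (S.filter (fun y => k * y ∈ A)).image (fun y => k * y) ∪ ((k • S) ∆ S) := by
    intro y hy
    rw [Finset.mem_filter] at hy
    by_cases hk : y ∈ k • S
    · obtain ⟨z, hz, rfl⟩ := Finset.mem_smul_finset.1 hk
      apply Finset.mem_union_left
      exact Finset.mem_image.2 ⟨z, Finset.mem_filter.2 ⟨hz, hy.2⟩, rfl⟩
    · apply Finset.mem_union_right
      exact Finset.mem_symmDiff.2 (Or.inr ⟨hy.1, hk⟩)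
  refine (Finset.card_le_card h).trans ((Finset.card_union_le _ _).trans ?_)
  exact Nat.add_le_add_right Finset.card_image_le _

lemma avg_count [Group G] (S K : Finset G) (A : Set G) :
    K.card * (S.filter (· ∈ A)).card ≤
      ∑ y ∈ S, (K.filter (fun k => k * y ∈ A)).card + ∑ k ∈ K, ((k • S) ∆ S).card := by
  have h1 : ∑ y ∈ S, (K.filter (fun k => k * y ∈ A)).card
      = ∑ k ∈ K, (S.filter (fun y => k * y ∈ A)).card := by
    simp only [Finset.card_filter]
    exact Finset.sum_comm
  rw [h1, ← Finset.sum_add_distrib, ← smul_eq_mul, ← Finset.sum_const]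
  exact Finset.sum_le_sum fun k _ => shift_count S A k

lemma main_est [Group G] (S : ℕ → Finset G) (hS : IsFolner S) (K : Finset G)
    (hK : K.Nonempty) (A C : Set G) (M m : ℝ) (hM : 0 ≤ M) (hm : 0 ≤ m)
    (h1 : ∀ y, ((K.filter (fun k => k * y ∈ A)).card : ℝ) ≤ M * K.card)
    (h2 : ∀ y, m * K.card < ((K.filter (fun k => k * y ∈ A)).card : ℝ) → y ∈ C)
    (η : ℝ) (hη : 0 < η) :
    ∀ᶠ n in atTop, dn S A n ≤ M * dn S C n + m + η := by
  have hK0 : (0 : ℝ) < K.card := by exact_mod_cast hK.card_pos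
  have ht : Tendsto (fun n => ∑ k ∈ K, (((k • S n) ∆ S n).card : ℝ) / ((S n).card : ℝ))
      atTop (nhds 0) := by
    have := tendsto_finsetSum (s := K) (fun k _ => hS.2 k)
    simpa using this
  filter_upwards [ht.eventually (gt_mem_nhds (mul_pos hη hK0))] with n hn
  have hs : (0 : ℝ) < (S n).card := by exact_mod_cast (hS.1 n).card_pos
  have ha : (K.card : ℝ) * ((S n).filter (· ∈ A)).card ≤
      ∑ y ∈ S n, ((K.filter (fun k => k * y ∈ A)).card : ℝ)
        + ∑ k ∈ K, (((k • S n) ∆ S n).card : ℝ) := by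
    exact_mod_cast avg_count (S n) K A
  have hb : ∑ y ∈ S n, ((K.filter (fun k => k * y ∈ A)).card : ℝ) ≤
      M * K.card * ((S n).filter (· ∈ C)).card + m * K.card * (S n).card := by
    have : ∀ y ∈ S n, ((K.filter (fun k => k * y ∈ A)).card : ℝ) ≤
        M * K.card * (if y ∈ C then 1 else 0) + m * K.card := by
      intro y _
      by_cases hy : y ∈ C
      · have := h1 y
        have : 0 ≤ m * K.card := by positivity
        simp only [hy, if_true]; linarith
      · have := not_lt.1 (mt (h2 y) hy)
        simp only [hy, if_false]; linarith
    refine (Finset.sum_le_sum this).trans (le_of_eq ?_)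
    rw [Finset.sum_add_distrib, ← Finset.mul_sum, Finset.sum_boole, Finset.sum_const, nsmul_eq_mul]
    ring
  rw [← Finset.sum_div, div_lt_iff₀ hs] at hn
  unfold dn
  have : (((S n).filter (· ∈ A)).card : ℝ) ≤
      M * ((S n).filter (· ∈ C)).card + m * (S n).card + η * (S n).card := by
    have : (K.card : ℝ) * ((S n).filter (· ∈ A)).card ≤ K.card *
      (M * ((S n).filter (· ∈ C)).card + m * (S n).card + η * (S n).card) := by
      linarith
    exact le_of_mul_le_mul_left this hK0
  rw [div_le_iff₀ hs]
  refine this.trans (le_of_eq ?_)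
  field_simp

lemma translate_folner [Group G] (S : ℕ → Finset G) (hS : IsFolner S) (x : ℕ → G) :
    IsFolner (fun n => (S n).image (fun k => k * x n)) := by
  refine ⟨fun n => (hS.1 n).image _, fun g => ?_⟩
  convert hS.2 g using 2 with n
  have hinj : Function.Injective (fun k => k * x n) := mul_left_injective (x n)
  have : g • (S n).image (fun k => k * x n) = (g • S n).image (fun k => k * x n) := by
    ext y
    simp only [Finset.mem_smul_finset, Finset.mem_image, smul_eq_mul]
    constructor
    · rintro ⟨_, ⟨a, ha, rfl⟩, rfl⟩
      exact ⟨g * a, ⟨a, ha, rfl⟩, by group⟩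
    · rintro ⟨_, ⟨a, ha, rfl⟩, rfl⟩
      exact ⟨a * x n, ⟨a, ha, rfl⟩, by group⟩
  rw [this, ← Finset.image_symmDiff _ _ hinj, Finset.card_image_of_injective _ hinj,
    Finset.card_image_of_injective _ hinj]

lemma exists_K [Group G] (S : ℕ → Finset G) (hS : IsFolner S) (B : Set G) (η : ℝ) (hη : 0 < η) :
    ∃ K : Finset G, K.Nonempty ∧
      ∀ y, ((K.filter (fun k => k * y ∈ B)).card : ℝ) ≤ (banachDens B + η) * K.card := by
  by_contra! hcon
  choose x hx using fun n => hcon (S n) (hS.1 n)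
  have hF := translate_folner S hS x
  set T := fun n => (S n).image (fun k => k * x n) with hT
  have hle : upperDens T B ≤ banachDens B :=
    le_csSup ⟨1, by rintro _ ⟨S, _, rfl⟩; exact upperDens_le_one S B⟩ ⟨T, hF, rfl⟩
  have hge : banachDens B + η ≤ upperDens T B := by
    refine le_limsup_of_frequently_le (Eventually.frequently (Eventually.of_forall fun n => ?_))
      (dn_bdd_above T B)
    have hs : (0 : ℝ) < (S n).card := by exact_mod_cast (hS.1 n).card_pos
    have hinj : Function.Injective (fun k => k * x n) := mul_left_injective (x n)
    simp only [hT]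
    rw [Finset.card_image_of_injective _ hinj, Finset.filter_image,
      Finset.card_image_of_injective _ hinj, le_div_iff₀ hs]
    exact (hx n).le
  linarith

lemma exists_F [Group G] (S : ℕ → Finset G) (hS : IsFolner S) (B : Set G)
    (hB : 0 < banachDens B) (δ : ℝ) (hδ : 0 < δ) :
    ∃ F : Finset G, ∃ T : ℕ → Finset G, IsFolner T ∧
      ∃ᶠ n in atTop, 1 - δ ≤ dn T ((F : Set G) * B) n := by
  obtain ⟨η, hη, h3⟩ : ∃ η, 0 < η ∧ 3 * η = δ * banachDens B :=
    ⟨δ * banachDens B / 3, by positivity, by ring⟩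
  obtain ⟨K, hK, hKB⟩ := exists_K S hS B η hη
  have hne : {d : ℝ | ∃ S : ℕ → Finset G, IsFolner S ∧ d = upperDens S B}.Nonempty :=
    ⟨_, S, hS, rfl⟩
  obtain ⟨_, ⟨T, hT, rfl⟩, hlt⟩ := exists_lt_of_lt_csSup hne
    (show banachDens B - η < sSup _ from by change _ < banachDens B; linarith)
  refine ⟨K⁻¹, T, hT, ?_⟩
  have hfr : ∃ᶠ n in atTop, banachDens B - η < dn T B n :=
    frequently_lt_of_lt_limsup (dn_bdd_below T B).isCoboundedUnder_le hlt
  have hev := main_est T hT K hK B (((K⁻¹ : Finset G) : Set G) * B) (banachDens B + η) 0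
    (by positivity) le_rfl hKB (by
      intro y hy
      have : 0 < (K.filter (fun k => k * y ∈ B)).card := by
        rw [zero_mul] at hy; exact_mod_cast hy
      obtain ⟨k, hk⟩ := Finset.card_pos.1 this
      rw [Finset.mem_filter] at hk
      exact Set.mem_mul.2 ⟨k⁻¹, by simpa using hk.1, k * y, hk.2, by group⟩) η hη
  refine (hfr.and_eventually hev).mono ?_
  rintro n ⟨h1, h2⟩
  have hpos : 0 < banachDens B + η := by positivity
  have : (banachDens B + η) * (1 - δ) ≤ (banachDens B + η) * dn T (((K⁻¹ : Finset G) : Set G) * B) n := by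
    nlinarith [mul_pos hδ hη]
  exact le_of_mul_le_mul_left this hpos

theorem stmt14 [Group G] [Countable G] (S : ℕ → Finset G) (hS : IsFolner S)
    (A B : Set G) (α : ℝ) (hα : 0 < α) (hA : α ≤ lowerDens S A)
    (hB : 0 < banachDens B) (ε : ℝ) (hε : 0 < ε) :
    ∃ F : Finset G, ∀ L : Finset G,
      α - ε ≤ lowerDens S {x : G | ∀ g ∈ L, g * x ∈ (F : Set G) * B * A} := by
  obtain ⟨δ, hδ, h4⟩ : ∃ δ, 0 < δ ∧ 4 * δ = ε := ⟨ε / 4, by positivity, by ring⟩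
  obtain ⟨F, T, hT, hfr⟩ := exists_F S hS B hB δ hδ
  refine ⟨F, fun L => ?_⟩
  have hL : ∀ᶠ n in atTop, ∀ g ∈ L, (((g • T n) ∆ T n).card : ℝ) / ((T n).card : ℝ) < δ :=
    (Filter.eventually_all_finset L).2 fun g _ => (hT.2 g).eventually (gt_mem_nhds hδ)
  obtain ⟨n, hn, hnL⟩ := (hfr.and_eventually hL).exists
  have hs : (0 : ℝ) < (T n).card := by exact_mod_cast (hT.1 n).card_pos
  have hev := main_est S hS (T n)⁻¹ (hT.1 n).inv A
    {x : G | ∀ g ∈ L, g * x ∈ (F : Set G) * B * A} 1 (2 * δ) zero_le_one (by positivity)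
    (fun y => by rw [one_mul]; exact_mod_cast Finset.card_filter_le _ _)
    (by
      intro x hx g hg
      by_contra hcon
      have hcard : (((T n)⁻¹).filter (fun k => k * x ∈ A)).card ≤
          ((T n).filter (fun t => ¬ t ∈ (F : Set G) * B)).card + ((g • T n) ∆ T n).card := by
        have hinj : Function.Injective (fun k : G => g * k⁻¹) := by
          intro a b hab; simpa using hab
        rw [← Finset.card_image_of_injective _ hinj]
        refine (Finset.card_le_card ?_).trans (Finset.card_union_le _ _)
        intro z hz
        obtain ⟨k, hk, rfl⟩ := Finset.mem_image.1 hz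
        rw [Finset.mem_filter, Finset.mem_inv'] at hk
        by_cases hz : g * k⁻¹ ∈ T n
        · apply Finset.mem_union_left
          refine Finset.mem_filter.2 ⟨hz, fun hD => hcon ?_⟩
          exact Set.mem_mul.2 ⟨g * k⁻¹, hD, k * x, hk.2, by group⟩
        · apply Finset.mem_union_right
          exact Finset.mem_symmDiff.2
            (Or.inl ⟨Finset.mem_smul_finset.2 ⟨k⁻¹, hk.1, rfl⟩, hz⟩)
      have hc : ((((T n)⁻¹).filter (fun k => k * x ∈ A)).card : ℝ) ≤
          ((T n).filter (fun t => ¬ t ∈ (F : Set G) * B)).card + ((g • T n) ∆ T n).card := by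
        exact_mod_cast hcard
      have hsum : (((T n).filter (· ∈ (F : Set G) * B)).card : ℝ) +
          ((T n).filter (fun t => ¬ t ∈ (F : Set G) * B)).card = (T n).card := by
        exact_mod_cast Finset.card_filter_add_card_filter_not (s := T n) (· ∈ (F : Set G) * B)
      have h1 := hnL g hg
      rw [div_lt_iff₀ hs] at h1
      unfold dn at hn
      rw [le_div_iff₀ hs] at hn
      rw [Finset.card_inv] at hx
      linarith) δ hδ
  have hA' : ∀ᶠ n in atTop, α - δ < dn S A n :=
    eventually_lt_of_lt_liminf (show α - δ < liminf (dn S A) atTop from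
      lt_of_lt_of_le (by linarith) hA) (dn_bdd_below S A)
  refine le_liminf_of_le (dn_bdd_above S _).isCoboundedUnder_ge ?_
  filter_upwards [hev, hA'] with k h1 h2
  change _ ≤ dn S {x : G | ∀ g ∈ L, g * x ∈ (F : Set G) * B * A} k
  linarith
end

section
/- Let G be a countable amenable group, S a Følner sequence, and A, B ⊆ G with d̄_S(A) ≥ α > 0 and BD(B) ≥ β > 0. Then there exist a real number s > 0 and a finite set E ⊆ G with |E| ≤ 1/(αβ) − 1/α + 1 such that EBA is S-thick of level s: for every finite L ⊆ G, the set {x ∈ G : Lx ⊆ EBA} has upper S-density at least s. -/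
open Filter Pointwise
open scoped symmDiff Classical

variable {G : Type*}

lemma ratio_le_one (S : ℕ → Finset G) (A : Set G) (n : ℕ) :
    (((S n).filter (· ∈ A)).card : ℝ) / ((S n).card : ℝ) ≤ 1 := by
  apply div_le_one_of_le₀
  · exact_mod_cast Finset.card_filter_le _ _
  · positivity

lemma ratio_bdd (S : ℕ → Finset G) (A : Set G) :
    IsBoundedUnder (· ≤ ·) atTop
      (fun n => (((S n).filter (· ∈ A)).card : ℝ) / ((S n).card : ℝ)) :=
  isBoundedUnder_of ⟨1, ratio_le_one S A⟩

lemma ratio_cobdd (S : ℕ → Finset G) (A : Set G) :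
    IsCoboundedUnder (· ≤ ·) atTop
      (fun n => (((S n).filter (· ∈ A)).card : ℝ) / ((S n).card : ℝ)) := by
  apply IsBoundedUnder.isCoboundedUnder_le
  exact isBoundedUnder_of ⟨0, fun n => by positivity⟩

lemma card_translate [Group G] (T : Finset G) (D : Set G) (e : G) :
    (((T.filter (· ∈ D)).card : ℝ)) - ((e • T) ∆ T).card ≤
      (T.filter (fun x => e⁻¹ * x ∈ D)).card := by
  have h : (e • (T.filter (· ∈ D))) ⊆
      (T.filter (fun x => e⁻¹ * x ∈ D)) ∪ ((e • T) ∆ T) := by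
    intro x hx
    rw [Finset.mem_smul_finset] at hx
    obtain ⟨y, hy, rfl⟩ := hx
    rw [Finset.mem_filter] at hy
    by_cases hT : e • y ∈ T
    · apply Finset.mem_union_left
      simp only [smul_eq_mul] at hT
      simp [hT, hy.2]
    · apply Finset.mem_union_right
      rw [Finset.mem_symmDiff]
      exact Or.inl ⟨Finset.smul_mem_smul_finset hy.1, hT⟩
  have h2 := (Finset.card_le_card h).trans (Finset.card_union_le _ _)
  rw [Finset.card_smul_finset] at h2
  have h3 : ((T.filter (· ∈ D)).card : ℝ) ≤
    (T.filter (fun x => e⁻¹ * x ∈ D)).card + ((e • T) ∆ T).card := by exact_mod_cast h2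
  linarith

lemma folner_eventually [Group G] {S : ℕ → Finset G} (hS : IsFolner S) (x : G) {η : ℝ}
    (hη : 0 < η) : ∀ᶠ n in atTop, (((x • S n) ∆ S n).card : ℝ) ≤ η * (S n).card := by
  filter_upwards [(hS.2 x).eventually (gt_mem_nhds hη)] with n hn
  have : (0 : ℝ) < (S n).card := by exact_mod_cast (hS.1 n).card_pos
  rw [div_lt_iff₀ this] at hn
  exact hn.le

lemma eventually_small [Group G] {S : ℕ → Finset G} (hS : IsFolner S) {P Q : Set G} {s : ℝ}
    (hQ : upperDens S Q < s) (hPQ : P ⊆ Q) :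
    ∀ᶠ N in atTop, (((S N).filter (· ∈ P)).card : ℝ) ≤ s * (S N).card := by
  filter_upwards [eventually_lt_of_limsup_lt hQ (ratio_bdd S _)] with N hN
  have hSN : (0 : ℝ) < (S N).card := by exact_mod_cast (hS.1 N).card_pos
  rw [div_lt_iff₀ hSN] at hN
  refine le_trans ?_ hN.le
  norm_cast
  apply Finset.card_le_card
  intro x hx
  rw [Finset.mem_filter] at hx ⊢
  exact ⟨hx.1, hPQ hx.2⟩

lemma select [Group G] {S : ℕ → Finset G} (hS : IsFolner S) (A B : Set G)
    (T : Finset G) (hT : T.Nonempty) {α' β' σ c : ℝ} (hβ0 : 0 ≤ β')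
    (hB : β' * T.card ≤ (T.filter (· ∈ B)).card)
    (hα0 : 0 < α')
    (hA : α' < upperDens S A) (P : Set G)
    (hP : ∀ᶠ n in atTop, (((S n).filter (· ∈ P)).card : ℝ) ≤ σ * (S n).card)
    (hc0 : 0 ≤ c) (hc : c + σ < β' * α') :
    ∃ x, x ∉ P ∧ c * T.card ≤ (T.filter (fun t => t ∈ B ∧ t⁻¹ * x ∈ A)).card := by
  by_contra! hcon
  obtain ⟨η, hη0, hη, hηα⟩ : ∃ η : ℝ, 0 < η ∧ c + σ < β' * (α' - η) ∧ 0 < α' - η := by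
    have h1 : ∀ᶠ η in nhds (0 : ℝ), c + σ < β' * (α' - η) := by
      have : Continuous (fun η : ℝ => β' * (α' - η)) := by fun_prop
      exact this.continuousAt.eventually (lt_mem_nhds (by simpa using hc))
    have h2 : ∀ᶠ η in nhds (0 : ℝ), 0 < α' - η := by
      have : Continuous (fun η : ℝ => (α' - η)) := by fun_prop
      exact this.continuousAt.eventually (lt_mem_nhds (by simpa using hα0))
    have h3 : ∀ᶠ η in nhdsWithin (0 : ℝ) (Set.Ioi 0), 0 < η := self_mem_nhdsWithin
    obtain ⟨η, a, b, c⟩ := (h3.and ((h1.filter_mono nhdsWithin_le_nhds).and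
      (h2.filter_mono nhdsWithin_le_nhds))).exists
    exact ⟨η, a, b, c⟩
  have hfr := frequently_lt_of_lt_limsup (ratio_cobdd S A) hA
  have hall : ∀ᶠ n in atTop, ∀ t ∈ T, (((t • S n) ∆ S n).card : ℝ) ≤ η * (S n).card := by
    rw [Filter.eventually_all_finset]
    intro t _
    exact folner_eventually hS t hη0
  obtain ⟨N, hN1, hN2, hN3⟩ := (hfr.and_eventually (hP.and hall)).exists
  have hSN : (0 : ℝ) < (S N).card := by exact_mod_cast (hS.1 N).card_pos
  have hTc : (0 : ℝ) < T.card := by exact_mod_cast hT.card_pos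
  rw [lt_div_iff₀ hSN] at hN1
  set TB := T.filter (· ∈ B) with hTB
  have hdc : ∑ t ∈ TB, (((S N).filter (fun x => t⁻¹ * x ∈ A)).card : ℝ)
      = ∑ x ∈ S N, ((TB.filter (fun t => t⁻¹ * x ∈ A)).card : ℝ) := by
    have := Finset.sum_card_bipartiteAbove_eq_sum_card_bipartiteBelow
      (s := TB) (t := S N) (fun t x => t⁻¹ * x ∈ A)
    simp only [Finset.bipartiteAbove, Finset.bipartiteBelow] at this
    exact_mod_cast this
  have hlow : (TB.card : ℝ) * ((α' - η) * (S N).card) ≤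
      ∑ t ∈ TB, (((S N).filter (fun x => t⁻¹ * x ∈ A)).card : ℝ) := by
    rw [← nsmul_eq_mul]
    apply Finset.card_nsmul_le_sum
    intro t ht
    have h1 := card_translate (S N) A t
    have h2 := hN3 t (Finset.mem_filter.1 ht).1
    linarith
  have hup : ∑ x ∈ S N, ((TB.filter (fun t => t⁻¹ * x ∈ A)).card : ℝ) ≤
      ∑ x ∈ S N, ((if x ∈ P then (T.card : ℝ) else 0) + c * T.card) := by
    apply Finset.sum_le_sum
    intro x _
    have hle : ((TB.filter (fun t => t⁻¹ * x ∈ A)).card : ℝ) ≤ T.card := by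
      exact_mod_cast (Finset.card_filter_le _ _).trans (Finset.card_filter_le _ _)
    split_ifs with hx
    · have : 0 ≤ c * T.card := by positivity
      linarith
    · have := hcon x hx
      rw [hTB, Finset.filter_filter]
      linarith
  rw [Finset.sum_add_distrib, ← Finset.sum_filter, Finset.sum_const, Finset.sum_const,
    nsmul_eq_mul, nsmul_eq_mul] at hup
  have h1 : (((S N).filter (· ∈ P)).card : ℝ) * T.card ≤ σ * (S N).card * T.card := by
    gcongr
  have h2 : β' * T.card * ((α' - η) * (S N).card) ≤ TB.card * ((α' - η) * (S N).card) := by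
    gcongr
  have h3 : (c + σ) * (T.card * (S N).card) < β' * (α' - η) * (T.card * (S N).card) := by
    gcongr
  nlinarith

lemma family_bound [Group G] {T : ℕ → Finset G} (hT : IsFolner T) (B : Set G)
    (D : ℕ → Set G) {b c : ℝ}
    (hB : ∀ n, b * (T n).card ≤ ((T n).filter (· ∈ B)).card)
    (hD : ∀ n, c * (T n).card ≤ ((T n).filter (· ∈ D n)).card)
    (F : Finset G)
    (hF : ∃ᶠ n in atTop, (∀ e ∈ F, ∀ d ∈ D n, e * d ∉ B) ∧
      ∀ e ∈ F, ∀ f ∈ F, e ≠ f → ∀ d ∈ D n, ∀ d' ∈ D n, e * d ≠ f * d') :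
    F.card * c + b ≤ 1 := by
  have key : ∀ η : ℝ, 0 < η → F.card * (c - η) + b ≤ 1 := by
    intro η hη
    have hall : ∀ᶠ n in atTop, ∀ t ∈ F, (((t • T n) ∆ T n).card : ℝ) ≤ η * (T n).card := by
      rw [Filter.eventually_all_finset]
      intro t _
      exact folner_eventually hT t hη
    obtain ⟨n, ⟨h1, h2⟩, h3⟩ := (hF.and_eventually hall).exists
    have hTn : (0 : ℝ) < (T n).card := by exact_mod_cast (hT.1 n).card_pos
    let V : G → Finset G := fun e => (T n).filter (fun x => e⁻¹ * x ∈ D n)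
    have hdisj : (F : Set G).PairwiseDisjoint V := by
      intro e he f hf hef
      rw [Function.onFun, Finset.disjoint_left]
      intro x hx hx'
      simp only [V, Finset.mem_filter] at hx hx'
      exact h2 e he f hf hef _ hx.2 _ hx'.2 (by simp)
    have hdB : Disjoint (F.biUnion V) ((T n).filter (· ∈ B)) := by
      rw [Finset.disjoint_left]
      intro x hx hx'
      rw [Finset.mem_biUnion] at hx
      obtain ⟨e, he, hx⟩ := hx
      simp only [V, Finset.mem_filter] at hx hx'
      exact h1 e he _ hx.2 (by simpa using hx'.2)
    have hsub : F.biUnion V ∪ ((T n).filter (· ∈ B)) ⊆ T n := by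
      apply Finset.union_subset
      · rw [Finset.biUnion_subset]
        intro e _
        exact Finset.filter_subset _ _
      · exact Finset.filter_subset _ _
    have hcard := Finset.card_le_card hsub
    rw [Finset.card_union_of_disjoint hdB, Finset.card_biUnion hdisj] at hcard
    have hcard' : (∑ e ∈ F, ((V e).card : ℝ)) + ((T n).filter (· ∈ B)).card ≤ (T n).card := by
      exact_mod_cast hcard
    have hlow : (F.card : ℝ) * ((c - η) * (T n).card) ≤ ∑ e ∈ F, ((V e).card : ℝ) := by
      rw [← nsmul_eq_mul]
      apply Finset.card_nsmul_le_sum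
      intro e he
      have a1 := card_translate (T n) (D n) e
      have a2 := h3 e he
      have a3 := hD n
      simp only [V]
      linarith
    have hb := hB n
    have : (F.card * (c - η) + b) * (T n).card ≤ 1 * (T n).card := by nlinarith
    exact le_of_mul_le_mul_right this hTn
  have hlim : Tendsto (fun η : ℝ => F.card * (c - η) + b) (nhdsWithin 0 (Set.Ioi 0))
      (nhds (F.card * c + b)) := by
    have : Continuous (fun η : ℝ => F.card * (c - η) + b) := by fun_prop
    have h := this.tendsto 0
    simp only [sub_zero] at h
    exact h.mono_left nhdsWithin_le_nhds
  apply le_of_tendsto hlim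
  filter_upwards [self_mem_nhdsWithin] with η hη using key η hη

lemma cover [Group G] {T : ℕ → Finset G} (hT : IsFolner T) (B : Set G)
    (D : ℕ → Set G) (hDB : ∀ n, D n ⊆ B) {b c : ℝ} (hc : 0 < c)
    (hB : ∀ n, b * (T n).card ≤ ((T n).filter (· ∈ B)).card)
    (hD : ∀ n, c * (T n).card ≤ ((T n).filter (· ∈ D n)).card)
    (k : ℕ) (hk : 1 - b < (k + 1) * c) :
    ∃ E : Finset G, E.card ≤ k + 1 ∧ ∀ g : G, ∀ᶠ n in (hyperfilter ℕ : Filter ℕ),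
      ∃ e ∈ E, ∃ y ∈ B, ∃ d ∈ D n, g * d = e * y := by
  let Q : Finset G → Prop := fun F => ∀ᶠ n in (hyperfilter ℕ : Filter ℕ),
    (∀ e ∈ F, ∀ d ∈ D n, e * d ∉ B) ∧
      ∀ e ∈ F, ∀ f ∈ F, e ≠ f → ∀ d ∈ D n, ∀ d' ∈ D n, e * d ≠ f * d'
  have hQ : ∀ F, Q F → F.card ≤ k := by
    intro F hF
    have h := family_bound hT B D hB hD F
      (hF.frequently.filter_mono Nat.hyperfilter_le_atTop)
    by_contra! hlt
    have : ((k : ℝ) + 1) ≤ F.card := by exact_mod_cast hlt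
    nlinarith
  have hDne : ∀ n, ∃ d, d ∈ D n := by
    intro n
    have hTn : (0 : ℝ) < (T n).card := by exact_mod_cast (hT.1 n).card_pos
    have : (0 : ℝ) < ((T n).filter (· ∈ D n)).card := lt_of_lt_of_le (by positivity) (hD n)
    obtain ⟨d, hd⟩ := Finset.card_pos.1 (by exact_mod_cast this)
    exact ⟨d, (Finset.mem_filter.1 hd).2⟩
  obtain ⟨F, hF, hmax⟩ : ∃ F, Q F ∧ ∀ F', Q F' → F'.card ≤ F.card := by
    let p : ℕ → Prop := fun m => ∃ F, Q F ∧ F.card = m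
    have h0 : p 0 := ⟨∅, by simp [Q], rfl⟩
    obtain ⟨F, hF, hFc⟩ := Nat.findGreatest_spec (P := p) (Nat.zero_le k) h0
    refine ⟨F, hF, fun F' hF' => ?_⟩
    rw [hFc]
    exact Nat.le_findGreatest (hQ F' hF') ⟨F', hF', rfl⟩
  refine ⟨insert 1 F, (Finset.card_insert_le _ _).trans (by have := hQ F hF; omega), ?_⟩
  intro g
  by_contra hcon
  rw [← Ultrafilter.eventually_not] at hcon
  have hgF : g ∉ F := by
    intro hg
    obtain ⟨n, hn⟩ := hcon.exists
    obtain ⟨d, hd⟩ := hDne n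
    exact hn ⟨g, Finset.mem_insert_of_mem hg, d, hDB n hd, d, hd, rfl⟩
  have hins : Q (insert g F) := by
    filter_upwards [hF, hcon] with n hn hg
    push Not at hg
    refine ⟨?_, ?_⟩
    · intro e he d hd heB
      rcases Finset.mem_insert.1 he with rfl | he
      · exact hg 1 (Finset.mem_insert_self _ _) _ heB d hd (by simp)
      · exact hn.1 e he d hd heB
    · intro e he f hf hef d hd d' hd' heq
      rcases Finset.mem_insert.1 he with h1 | he1 <;>
        rcases Finset.mem_insert.1 hf with h2 | hf1
      · exact hef (h1.trans h2.symm)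
      · subst h1
        exact hg f (Finset.mem_insert_of_mem hf1) d' (hDB n hd') d hd heq
      · subst h2
        exact hg e (Finset.mem_insert_of_mem he1) d (hDB n hd) d' hd' heq.symm
      · exact hn.2 e he1 f hf1 hef d hd d' hd' heq
  have := hmax _ hins
  rw [Finset.card_insert_of_notMem hgF] at this
  omega

set_option maxHeartbeats 1000000 in
theorem stmt15 [Group G] [Countable G] (S : ℕ → Finset G) (hS : IsFolner S)
    (A B : Set G) (α β : ℝ) (hα : 0 < α) (hβ : 0 < β)
    (hA : α ≤ upperDens S A) (hB : β ≤ banachDens B) :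
    ∃ s : ℝ, 0 < s ∧ ∃ E : Finset G, (E.card : ℝ) ≤ 1 / (α * β) - 1 / α + 1 ∧
      ∀ L : Finset G, s ≤ upperDens S {x : G | ∀ g ∈ L, g * x ∈ (E : Set G) * B * A} := by
  by_contra! hcon
  have hβ1 : β ≤ 1 := by
    apply hB.trans
    unfold banachDens
    refine csSup_le (Set.nonempty_of_mem (x := upperDens S B) ⟨S, hS, rfl⟩) ?_
    rintro d ⟨T, hT, rfl⟩
    apply limsup_le_of_le (ratio_cobdd T B)
    exact Eventually.of_forall (ratio_le_one T B)
  have hαβ : 0 < α * β := by positivity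
  set k : ℕ := ⌊(1 - β) / (α * β)⌋₊ with hk
  have hk1 : 1 - β < (k + 1) * (α * β) := by
    have := Nat.lt_floor_add_one ((1 - β) / (α * β))
    rwa [div_lt_iff₀ hαβ] at this
  have hk2 : (k : ℝ) + 1 ≤ 1 / (α * β) - 1 / α + 1 := by
    have h1 : (k : ℝ) ≤ (1 - β) / (α * β) := Nat.floor_le (div_nonneg (by linarith) hαβ.le)
    have h2 : (1 - β) / (α * β) = 1 / (α * β) - 1 / α := by field_simp
    linarith
  obtain ⟨ε, hε, hαε, hβε, hc, hkε⟩ : ∃ ε : ℝ, 0 < ε ∧ 0 < α - ε ∧ 0 < β - ε ∧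
      0 < (β - ε) * (α - ε) - 2 * ε ∧
      1 - (β - ε) < (k + 1) * ((β - ε) * (α - ε) - 2 * ε) := by
    have ev : ∀ f : ℝ → ℝ, Continuous f → 0 < f 0 →
        ∀ᶠ η in nhdsWithin (0 : ℝ) (Set.Ioi 0), 0 < f η := fun f hf h0 =>
      (hf.continuousAt.eventually (lt_mem_nhds h0)).filter_mono nhdsWithin_le_nhds
    have h0 : ∀ᶠ η in nhdsWithin (0 : ℝ) (Set.Ioi 0), 0 < η := self_mem_nhdsWithin
    have e1 := ev (fun ε => α - ε) (by fun_prop) (by simpa)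
    have e2 := ev (fun ε => β - ε) (by fun_prop) (by simpa)
    have e3 := ev (fun ε => (β - ε) * (α - ε) - 2 * ε) (by fun_prop) (by simp; positivity)
    have e4 := ev (fun ε => (k + 1) * ((β - ε) * (α - ε) - 2 * ε) - (1 - (β - ε)))
      (by fun_prop) (by simp only [sub_zero, mul_zero]; nlinarith)
    obtain ⟨ε, a, b, c, d, e⟩ := (h0.and (e1.and (e2.and (e3.and e4)))).exists
    exact ⟨ε, a, b, c, d, by linarith⟩
  -- the Følner sequence for B
  obtain ⟨T, hT, hTB⟩ : ∃ T : ℕ → Finset G, IsFolner T ∧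
      ∀ n, (β - ε) * (T n).card ≤ ((T n).filter (· ∈ B)).card := by
    obtain ⟨d, ⟨T, hT, rfl⟩, hd⟩ := exists_lt_of_lt_csSup
      (s := {d : ℝ | ∃ S : ℕ → Finset G, IsFolner S ∧ d = upperDens S B})
      ⟨_, S, hS, rfl⟩ (show β - ε < _ from lt_of_lt_of_le (by linarith) hB)
    have hfr := frequently_lt_of_lt_limsup (ratio_cobdd T B) hd
    obtain ⟨φ, hφ, h⟩ := extraction_of_frequently_atTop hfr
    refine ⟨T ∘ φ, ⟨fun n => hT.1 _, fun x => (hT.2 x).comp hφ.tendsto_atTop⟩, fun n => ?_⟩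
    have hTn : (0 : ℝ) < (T (φ n)).card := by exact_mod_cast (hT.1 (φ n)).card_pos
    have := h n
    rw [lt_div_iff₀ hTn] at this
    exact this.le
  -- enumerate the candidate sets
  obtain ⟨en, hen⟩ := exists_surjective_nat (Finset G)
  have hL : ∀ i : ℕ, ∃ L : Finset G, (en i).card ≤ k + 1 →
      upperDens S {x : G | ∀ g ∈ L, g * x ∈ (en i : Set G) * B * A} < ε / 2 / 2 ^ i := by
    intro i
    by_cases h : (en i).card ≤ k + 1
    · have h' : ((en i).card : ℝ) ≤ k + 1 := by exact_mod_cast h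
      obtain ⟨L, hL⟩ := hcon (ε / 2 / 2 ^ i) (by positivity) (en i) (h'.trans hk2)
      exact ⟨L, fun _ => hL⟩
    · exact ⟨∅, fun h' => absurd h' h⟩
  choose L hL using hL
  obtain ⟨P, hPdef⟩ : ∃ P : ℕ → Set G, ∀ i x, x ∈ P i ↔
      ((en i).card ≤ k + 1 ∧ ∀ g ∈ L i, g * x ∈ (en i : Set G) * B * A) :=
    ⟨fun i => {x | (en i).card ≤ k + 1 ∧ ∀ g ∈ L i, g * x ∈ (en i : Set G) * B * A},
      fun i x => Iff.rfl⟩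
  have hP : ∀ i, ∀ᶠ N in atTop,
      (((S N).filter (· ∈ P i)).card : ℝ) ≤ ε / 2 / 2 ^ i * (S N).card := by
    intro i
    by_cases h : (en i).card ≤ k + 1
    · exact eventually_small hS (hL i h) (fun x hx => ((hPdef i x).1 hx).2)
    · refine Eventually.of_forall fun N => ?_
      have h0 : (S N).filter (· ∈ P i) = ∅ := by
        rw [Finset.filter_eq_empty_iff]
        intro x _ hx
        exact h ((hPdef i x).1 hx).1
      rw [h0, Finset.card_empty, Nat.cast_zero]
      positivity
  have hx : ∀ n, ∃ x, x ∉ (⋃ i ∈ Finset.range n, P i) ∧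
      ((β - ε) * (α - ε) - 2 * ε) * (T n).card ≤
        ((T n).filter (fun t => t ∈ B ∧ t⁻¹ * x ∈ A)).card := by
    intro n
    apply select hS A B (T n) (hT.1 n) hβε.le (hTB n) hαε (lt_of_lt_of_le (by linarith) hA)
      _ (σ := ε) _ hc.le (by linarith)
    have hall : ∀ᶠ N in atTop, ∀ i ∈ Finset.range n,
        (((S N).filter (· ∈ P i)).card : ℝ) ≤ ε / 2 / 2 ^ i * (S N).card := by
      rw [Filter.eventually_all_finset]
      intro i _
      exact hP i
    filter_upwards [hall] with N hN
    have hsub : (S N).filter (· ∈ ⋃ i ∈ Finset.range n, P i) ⊆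
        (Finset.range n).biUnion (fun i => (S N).filter (· ∈ P i)) := by
      intro x hx
      simp only [Finset.mem_filter, Set.mem_iUnion, Finset.mem_biUnion] at hx ⊢
      obtain ⟨h1, i, hi, h2⟩ := hx
      exact ⟨i, hi, h1, h2⟩
    have h1 := (Finset.card_le_card hsub).trans Finset.card_biUnion_le
    have h2 : (((S N).filter (· ∈ ⋃ i ∈ Finset.range n, P i)).card : ℝ) ≤
        ∑ i ∈ Finset.range n, (((S N).filter (· ∈ P i)).card : ℝ) := by exact_mod_cast h1
    refine h2.trans ((Finset.sum_le_sum hN).trans ?_)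
    rw [← Finset.sum_mul]
    gcongr
    exact ((summable_geometric_two' ε).sum_le_tsum _ (fun i _ => by positivity)).trans
      (tsum_geometric_two' ε).le
  choose x hxP hxD using hx
  obtain ⟨E, hE, hcov⟩ := cover hT B (fun n => {t | t ∈ B ∧ t⁻¹ * x n ∈ A})
    (fun n t ht => ht.1) hc hTB
    (fun n => by
      refine (hxD n).trans (le_of_eq ?_)
      congr 2
      ext t
      simp only [Finset.mem_filter]
      rfl) k hkε
  obtain ⟨i, rfl⟩ := hen E
  have hev : ∀ᶠ n in (hyperfilter ℕ : Filter ℕ), ∀ g ∈ L i,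
      ∃ e ∈ en i, ∃ y ∈ B, ∃ d ∈ {t | t ∈ B ∧ t⁻¹ * x n ∈ A}, g * d = e * y := by
    rw [Filter.eventually_all_finset]
    intro g _
    exact hcov g
  have hgt : ∀ᶠ n in (hyperfilter ℕ : Filter ℕ), i < n :=
    (eventually_gt_atTop i).filter_mono Nat.hyperfilter_le_atTop
  obtain ⟨n, hn, hin⟩ := (hev.and hgt).exists
  apply hxP n
  simp only [Set.mem_iUnion]
  refine ⟨i, Finset.mem_range.2 hin, (hPdef i _).2 ⟨hE, fun g hg => ?_⟩⟩
  obtain ⟨e, he, y, hy, d, hd, heq⟩ := hn g hg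
  have : g * x n = e * y * (d⁻¹ * x n) := by rw [← heq]; group
  rw [this]
  exact Set.mul_mem_mul (Set.mul_mem_mul (by exact_mod_cast he) hy) hd.2
end
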